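/- Case C, p ≡ 3 (mod 8): Let N = 2^{r0} with r0 ≥ 3 and suppose p ≡ 3 (mod 8) (so that f = 2^{r0-2} = φ(N)/2). Then there exist ε ∈ {1, -1} and integers a, b with a² + 2b² = p such that G(χ) = ε · i√p · p^{2^{r0-3}-1} · (a + b √-2). -/

import Mathlib

open Complex Polynomial IntermediateField

/-- The complex primitive `p`-th root of unity `exp(2πi/p)`. -/
noncomputable def zetaP (p : ℕ) : ℂ := Complex.exp (2 * Real.pi * Complex.I / p)

/-- The Gauss sum `G(χ^λ) = ∑_{x ∈ F, x ≠ 0} χ^λ(x) ζ_p^{T(x)}`, where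
`T` is the trace map from `F` down to `ZMod p`. -/
noncomputable def gaussSumN (p : ℕ) {F : Type} [Field F] [Fintype F] [Algebra (ZMod p) F]
    (χ : MulChar F ℂ) (lam : ℕ) : ℂ :=
  letI : DecidableEq F := Classical.decEq F
  ∑ x ∈ Finset.univ.filter (fun x : F => x ≠ 0),
    (χ ^ lam) x * zetaP p ^ (Algebra.trace (ZMod p) F x).val

/-- `√-m = i√m ∈ ℂ`. -/
noncomputable def sqrtNeg (m : ℕ) : ℂ := Real.sqrt m * Complex.I

theorem sqrtNeg_sq (m : ℕ) : sqrtNeg m ^ 2 = -(m : ℂ) := by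
  have h : ((Real.sqrt m : ℝ) : ℂ) ^ 2 = ((m : ℝ) : ℂ) := by
    rw [← Complex.ofReal_pow, Real.sq_sqrt (by positivity)]
  simp only [sqrtNeg, mul_pow, Complex.I_sq, h]
  push_cast
  ring

theorem isIntegral_sqrtNeg (m : ℕ) : IsIntegral ℚ (sqrtNeg m) := by
  refine ⟨X ^ 2 + C (m : ℚ), monic_X_pow_add_C _ (by norm_num), ?_⟩
  simp [sqrtNeg_sq]

/-- The class number `h(ℚ(√-m))` of the quadratic field `ℚ(√-m) ⊆ ℂ`. -/
noncomputable def classNumSqrtNeg (m : ℕ) : ℕ :=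
  haveI : FiniteDimensional ℚ ℚ⟮sqrtNeg m⟯ :=
    IntermediateField.adjoin.finiteDimensional (isIntegral_sqrtNeg m)
  haveI : CharZero ℚ⟮sqrtNeg m⟯ :=
    charZero_of_injective_algebraMap (algebraMap ℚ ℚ⟮sqrtNeg m⟯).injective
  haveI : NumberField ℚ⟮sqrtNeg m⟯ := ⟨⟩
  NumberField.classNumber ℚ⟮sqrtNeg m⟯

/-- `√p* = √p` if `p ≡ 1 (mod 4)` and `i√p` if `p ≡ 3 (mod 4)`. -/
noncomputable def sqrtPStar (p : ℕ) : ℂ :=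
  if p % 4 = 1 then (Real.sqrt p : ℂ) else (Real.sqrt p : ℂ) * Complex.I

/-!
Write `q` for the size of the prime field `K`, let `F` be its extension of degree `2 ^ (n + 1)`, and
let `χ` have order `2 ^ (n + 3)`. Splitting the Gauss sum of `χ` along the trace gives `G(χ) = g E`,
where `g` is the Gauss sum of the restriction of `χ` to `K` and `E`, the Eisenstein sum of `χ`, is
the sum of `χ` over the elements of trace `1`. As `q ≡ 3 (mod 8)`, that restriction is the odd
quadratic character of `K`, so `g = ± i√q`.

The Frobenius conjugates of `χ` are its powers with exponent `≡ 1, 3 (mod 8)`; `E` is invariant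
under them, so it lies in `ℚ(√-2)`. For divisibility, let `η` be the quadratic character of `F`.
As long as `χ` has order at least `16`, the character `χη` is again a Frobenius conjugate of `χ`, so
the duplication formula of Hasse and Davenport reads `χ(4) G(χ)² = G(η) G(χ²)`. Iterating it gives
`(χ(2)ⁿ G(χ)) ^ 2ⁿ = G(η) ^ (2ⁿ - 1) G(χ ^ 2ⁿ)`, and as `G(η)² = q ^ 2ⁿ⁺¹`, the quotient
`G(χ) / q ^ (2ⁿ - 1)` is an algebraic integer. Hence `z = E / q ^ (2ⁿ - 1)` is an element of
`ℚ(√-2)` of norm `q` for which `q z²` is integral, and as `q` is prime this forces `z ∈ ℤ[√-2]`.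
-/

section Arithmetic

lemma exists_odd_pow_two_pow_eq_one_add {q : ℕ} (hq : q % 8 = 3 ∨ q % 8 = 5) (n : ℕ) :
    ∃ v, Odd v ∧ q ^ 2 ^ (n + 1) = 1 + 2 ^ (n + 3) * v := by
  induction n with
  | zero =>
    rcases hq with hq | hq
    · obtain ⟨k, rfl⟩ : ∃ k, q = 8 * k + 3 := ⟨q / 8, by omega⟩
      exact ⟨2 * (4 * k ^ 2 + 3 * k) + 1, odd_two_mul_add_one _, by ring⟩
    · obtain ⟨k, rfl⟩ : ∃ k, q = 8 * k + 5 := ⟨q / 8, by omega⟩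
      exact ⟨2 * (4 * k ^ 2 + 5 * k + 1) + 1, odd_two_mul_add_one _, by ring⟩
  | succ n ih =>
    obtain ⟨v, hv, hqv⟩ := ih
    refine ⟨v + 2 * (2 ^ (n + 1) * v ^ 2), hv.add_even (even_two_mul _), ?_⟩
    rw [pow_succ 2 (n + 1), pow_mul, hqv]
    ring

lemma orderOf_natCast_zmod_two_pow {q : ℕ} (hq : q % 8 = 3 ∨ q % 8 = 5) (n : ℕ) :
    orderOf (q : ZMod (2 ^ (n + 3))) = 2 ^ (n + 1) := by
  have pow_eq_one_iff (m : ℕ) :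
      (q : ZMod (2 ^ (n + 3))) ^ m = 1 ↔ 1 ≡ q ^ m [MOD 2 ^ (n + 3)] := by
    rw [← ZMod.natCast_eq_natCast_iff, Nat.cast_one, Nat.cast_pow, eq_comm]
  apply orderOf_eq_prime_pow
  · rw [pow_eq_one_iff]
    intro h
    rcases n with _ | n
    · simp only [Nat.ModEq, zero_add, pow_zero, pow_one] at h
      omega
    · obtain ⟨v, hv, hqv⟩ := exists_odd_pow_two_pow_eq_one_add hq n
      rw [hqv, Nat.modEq_iff_dvd' (Nat.le_add_right _ _), Nat.add_sub_cancel_left,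
        add_right_comm, pow_succ] at h
      exact Nat.not_even_iff_odd.2 hv
        (even_iff_two_dvd.2 (Nat.dvd_of_mul_dvd_mul_left (by positivity) h))
  · obtain ⟨v, -, hqv⟩ := exists_odd_pow_two_pow_eq_one_add hq n
    rw [pow_eq_one_iff, hqv, Nat.modEq_iff_dvd' (Nat.le_add_right _ _), Nat.add_sub_cancel_left]
    exact dvd_mul_right _ _

lemma isIntegral_of_isRadical_mul_sq {R K : Type*} [CommRing R] [IsDomain R] [IsIntegrallyClosed R]
    [Field K] [Algebra R K] [IsFractionRing R K] {d : R} (hd : IsRadical d) (hd0 : d ≠ 0) {r : K}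
    (hr : IsIntegral R (algebraMap R K d * r ^ 2)) : IsIntegral R r := by
  obtain ⟨m, hm⟩ := IsIntegrallyClosed.isIntegral_iff.1 hr
  have hsq : (algebraMap R K d * r) ^ 2 = algebraMap R K (d * m) := by
    rw [map_mul, hm]
    ring
  obtain ⟨k, hk⟩ : ∃ k, algebraMap R K k = algebraMap R K d * r :=
    IsIntegrallyClosed.exists_algebraMap_eq_of_isIntegral_pow two_pos
      (hsq ▸ isIntegral_algebraMap)
  have hkm : k ^ 2 = d * m := IsFractionRing.injective R K (by rw [map_pow, hk, hsq])
  obtain ⟨l, rfl⟩ := hd 2 k (hkm ▸ dvd_mul_right d m)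
  rw [map_mul] at hk
  have hd0' : algebraMap R K d ≠ 0 := (map_ne_zero_iff _ (IsFractionRing.injective R K)).2 hd0
  exact mul_left_cancel₀ hd0' hk ▸ isIntegral_algebraMap

lemma exists_int_eq_of_sq_add_two_mul_sq {d : ℤ} (hd : Squarefree d) {x y : ℚ}
    (hxy : x ^ 2 + 2 * y ^ 2 = d) (hx : IsIntegral ℤ ((d : ℚ) * (2 * x) ^ 2)) :
    ∃ a b : ℤ, x = a ∧ y = b := by
  obtain ⟨t, ht⟩ := IsIntegrallyClosed.isIntegral_iff.1
    (isIntegral_of_isRadical_mul_sq hd.isRadical hd.ne_zero hx)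
  rw [eq_intCast] at ht
  have hy : IsIntegral ℤ (algebraMap ℤ ℚ 2 * (2 * y) ^ 2) := by
    have : algebraMap ℤ ℚ 2 * (2 * y) ^ 2 = algebraMap ℤ ℚ (4 * d - t ^ 2) := by
      simp only [eq_intCast]
      push_cast
      linear_combination 4 * hxy + (t + 2 * x) * ht
    exact this ▸ isIntegral_algebraMap
  obtain ⟨u, hu⟩ := IsIntegrallyClosed.isIntegral_iff.1
    (isIntegral_of_isRadical_mul_sq Int.prime_two.isRadical two_ne_zero hy)
  rw [eq_intCast] at hu
  have htu : t ^ 2 + 2 * u ^ 2 = 4 * d := by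
    have : (t : ℚ) ^ 2 + 2 * u ^ 2 = 4 * d := by
      rw [ht, hu]
      linear_combination 4 * hxy
    exact_mod_cast this
  obtain ⟨a, rfl⟩ : 2 ∣ t :=
    Int.prime_two.dvd_of_dvd_pow (n := 2) ⟨2 * d - u ^ 2, by linear_combination htu⟩
  obtain ⟨b, rfl⟩ : 2 ∣ u :=
    Int.prime_two.dvd_of_dvd_pow (n := 2) ⟨d - a ^ 2, by linarith⟩
  refine ⟨a, b, ?_, ?_⟩
  · push_cast at ht
    linarith
  · push_cast at hu
    linarith

end Arithmetic

section SqrtNeg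

lemma exists_rat_eq_of_mem_adjoin_sqrtNeg {m : ℕ} {z : ℂ} (hz : z ∈ ℚ⟮sqrtNeg m⟯) :
    ∃ x y : ℚ, z = x + y * sqrtNeg m := by
  rw [← IntermediateField.mem_toSubalgebra,
    IntermediateField.adjoin_simple_toSubalgebra_of_isAlgebraic
      (isIntegral_sqrtNeg m).isAlgebraic] at hz
  induction hz using Algebra.adjoin_induction with
  | mem z hz => exact ⟨0, 1, by simp [Set.mem_singleton_iff.1 hz]⟩
  | algebraMap r => exact ⟨r, 0, by simp⟩
  | add z w _ _ hz hw =>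
    obtain ⟨a, b, rfl⟩ := hz
    obtain ⟨c, d, rfl⟩ := hw
    exact ⟨a + c, b + d, by push_cast; ring⟩
  | mul z w _ _ hz hw =>
    obtain ⟨a, b, rfl⟩ := hz
    obtain ⟨c, d, rfl⟩ := hw
    refine ⟨a * c - m * b * d, a * d + b * c, ?_⟩
    push_cast
    linear_combination (b * d : ℂ) * sqrtNeg_sq m

lemma normSq_add_mul_sqrtNeg (m : ℕ) (x y : ℝ) :
    normSq (x + y * sqrtNeg m) = x ^ 2 + m * y ^ 2 := by
  rw [sqrtNeg, ← mul_assoc, ← ofReal_mul, normSq_add_mul_I, mul_pow, Real.sq_sqrt m.cast_nonneg]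
  ring

lemma conj_sqrtNeg (m : ℕ) : (starRingEnd ℂ) (sqrtNeg m) = -sqrtNeg m := by
  rw [sqrtNeg, map_mul, conj_ofReal, conj_I, mul_neg]

lemma exists_int_eq_of_isIntegral_mul_sq {d : ℤ} (hd : Squarefree d) {x y : ℚ}
    (hxy : x ^ 2 + 2 * y ^ 2 = d)
    (hint : IsIntegral ℤ ((d : ℂ) * (x + y * sqrtNeg 2) ^ 2)) :
    ∃ a b : ℤ, x = a ∧ y = b := by
  refine exists_int_eq_of_sq_add_two_mul_sq hd hxy ?_
  have hconj : IsIntegral ℤ ((d : ℂ) * (x - y * sqrtNeg 2) ^ 2) := by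
    have := map_isIntegral_int (starRingEnd ℂ) hint
    simpa only [map_mul, map_pow, map_add, map_intCast, map_ratCast, conj_sqrtNeg, mul_neg,
      ← sub_eq_add_neg] using this
  have htrace : algebraMap ℚ ℂ (d * (2 * x) ^ 2) = d * (x + y * sqrtNeg 2) ^ 2 +
      d * (x - y * sqrtNeg 2) ^ 2 + algebraMap ℤ ℂ (2 * d ^ 2) := by
    have hxy' : (x : ℂ) ^ 2 + 2 * y ^ 2 = d := by exact_mod_cast hxy
    simp only [map_mul, map_pow, map_ofNat, eq_intCast, eq_ratCast, map_intCast]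
    linear_combination 2 * (d : ℂ) * hxy' - 2 * d * y ^ 2 * sqrtNeg_sq 2
  rw [← isIntegral_algebraMap_iff (algebraMap ℚ ℂ).injective, htrace]
  exact (hint.add hconj).add isIntegral_algebraMap

lemma add_pow_three_mem_adjoin_sqrtNeg_two {ω : ℂ} (hω : ω ^ 8 = 1) :
    ω + ω ^ 3 ∈ ℚ⟮sqrtNeg 2⟯ := by
  have hω4 : ω ^ 4 = 1 ∨ ω ^ 4 = -1 := sq_eq_one_iff.1 (by rw [← pow_mul, hω])
  rcases hω4 with h4 | h4
  · have hω2 : ω ^ 2 = 1 ∨ ω ^ 2 = -1 := sq_eq_one_iff.1 (by rw [← pow_mul, h4])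
    rcases hω2 with h2 | h2
    · rw [pow_succ, h2, one_mul]
      rcases sq_eq_one_iff.1 h2 with rfl | rfl
      · exact add_mem (one_mem _) (one_mem _)
      · exact add_mem (neg_mem (one_mem _)) (neg_mem (one_mem _))
    · rw [pow_succ, h2, neg_one_mul, add_neg_cancel]
      exact zero_mem _
  · have hsq : (ω + ω ^ 3) ^ 2 = sqrtNeg 2 ^ 2 := by
      rw [sqrtNeg_sq]
      push_cast
      linear_combination (ω ^ 2 + 2) * h4
    have hmem : sqrtNeg 2 ∈ ℚ⟮sqrtNeg 2⟯ := IntermediateField.mem_adjoin_simple_self ℚ _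
    rcases sq_eq_sq_iff_eq_or_eq_neg.1 hsq with h | h
    · exact h ▸ hmem
    · exact h ▸ neg_mem hmem

lemma sum_pow_pow_mem_adjoin_sqrtNeg_two {q : ℕ} (hq : q % 8 = 3) (n : ℕ) {ω : ℂ}
    (hω : ω ^ 2 ^ (n + 3) = 1) :
    ∑ k ∈ Finset.range (2 ^ (n + 1)), ω ^ q ^ k ∈ ℚ⟮sqrtNeg 2⟯ := by
  induction n with
  | zero =>
    have hω8 : ω ^ 8 = 1 := hω
    have hωq : ω ^ q = ω ^ 3 := by rw [pow_eq_pow_mod q hω8, hq]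
    simpa [Finset.sum_range_succ, hωq] using add_pow_three_mem_adjoin_sqrtNeg_two hω8
  | succ n ih =>
    obtain ⟨v, hv, hqv⟩ := exists_odd_pow_two_pow_eq_one_add (Or.inl hq) n
    have hsplit : ∑ k ∈ Finset.range (2 ^ (n + 2)), ω ^ q ^ k =
        ∑ k ∈ Finset.range (2 ^ (n + 1)), (ω ^ q ^ k + (ω ^ q ^ 2 ^ (n + 1)) ^ q ^ k) := by
      rw [pow_succ 2 (n + 1), mul_two, Finset.sum_range_add, Finset.sum_add_distrib]
      simp only [pow_add, pow_mul]
    have hω_sq : (ω ^ 2 ^ (n + 3)) ^ 2 = 1 := by rwa [← pow_mul, ← pow_succ]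
    rw [hsplit, hqv, pow_add ω, pow_one, pow_mul ω]
    rcases sq_eq_one_iff.1 hω_sq with h | h
    · simp only [h, one_pow, mul_one, Finset.sum_add_distrib]
      exact add_mem (ih h) (ih h)
    · have hq_odd : Odd q := Nat.odd_iff.2 (by omega)
      simp only [h, hv.neg_one_pow, mul_neg_one, hq_odd.pow.neg_pow, add_neg_cancel,
        Finset.sum_const_zero, zero_mem]

end SqrtNeg

section QuadraticCharacter

lemma mulChar_ne_one_of_apply_neg_one {A R : Type*} [CommRing A] [CommRing R] [CharZero R]
    {χ : MulChar A R} (hχ : χ (-1) = -1) : χ ≠ 1 := by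
  rintro rfl
  rw [MulChar.one_apply isUnit_one.neg] at hχ
  norm_num at hχ

variable {F R : Type*} [Field F] [CommRing R]

lemma mulChar_eq_of_sq_eq_one [Finite F] [IsDomain R] {χ φ : MulChar F R} (hχ : χ ^ 2 = 1)
    (hχ1 : χ ≠ 1) (hφ : φ ^ 2 = 1) (hφ1 : φ ≠ 1) : χ = φ := by
  obtain ⟨g, hg⟩ := IsCyclic.exists_generator (α := Fˣ)
  have apply_generator {θ : MulChar F R} (hθ : θ ^ 2 = 1) (hθ1 : θ ≠ 1) : θ g = -1 := by
    have hsq : θ g ^ 2 = 1 := by rw [← MulChar.pow_apply_coe, hθ, MulChar.one_apply_coe]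
    refine (sq_eq_one_iff.1 hsq).resolve_left fun h => hθ1 ?_
    rw [MulChar.eq_iff hg, h, MulChar.one_apply_coe]
  rw [MulChar.eq_iff hg, apply_generator hχ hχ1, apply_generator hφ hφ1]

variable [Fintype F] [DecidableEq F]

variable (F R) in
/-- The quadratic character of a finite field, taking its values `0, 1, -1` in a ring `R`; the
integer-valued version is Mathlib's `quadraticChar`. -/
def quadraticMulChar : MulChar F R :=
  (quadraticChar F).ringHomComp (Int.castRingHom R)

lemma quadraticMulChar_sq : quadraticMulChar F R ^ 2 = 1 :=
  ((quadraticChar_isQuadratic F).comp _).sq_eq_one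

lemma quadraticMulChar_ne_one [CharZero R] (hF : ringChar F ≠ 2) : quadraticMulChar F R ≠ 1 :=
  (MulChar.ringHomComp_ne_one_iff Int.cast_injective).2 (quadraticChar_ne_one hF)

lemma card_sqrts_eq_quadraticMulChar_add_one (hF : ringChar F ≠ 2) (a : F) :
    ((Finset.univ.filter fun y : F => y ^ 2 = a).card : R) = quadraticMulChar F R a + 1 := by
  have h := congrArg (Int.cast : ℤ → R) (quadraticChar_card_sqrts hF a)
  rw [Set.toFinset_ofPred] at h
  simpa [quadraticMulChar] using h

variable [IsDomain R]

lemma pow_eq_quadraticMulChar [CharZero R] (hF : ringChar F ≠ 2) {χ : MulChar F R} {m : ℕ}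
    (hm : m ≠ 0) (hχ : orderOf χ = 2 * m) : χ ^ m = quadraticMulChar F R := by
  refine mulChar_eq_of_sq_eq_one ?_ ?_ quadraticMulChar_sq (quadraticMulChar_ne_one hF)
  · rw [← pow_mul, mul_comm, ← hχ, pow_orderOf_eq_one]
  · exact pow_ne_one_of_lt_orderOf hm (by omega)

lemma sum_apply_one_sub_sq (hF : ringChar F ≠ 2) {χ : MulChar F R} (hχ : χ ≠ 1) :
    ∑ y, χ (1 - y ^ 2) = jacobiSum χ (quadraticMulChar F R) := by
  have hsum : ∑ a, χ (1 - a) = 0 :=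
    (Fintype.sum_equiv (Equiv.subLeft 1) _ _ fun _ => rfl).trans
      (MulChar.sum_eq_zero_of_ne_one hχ)
  calc ∑ y, χ (1 - y ^ 2)
      = ∑ a, ∑ y with y ^ 2 = a, χ (1 - y ^ 2) := (Finset.sum_fiberwise _ _ _).symm
    _ = ∑ a, (quadraticMulChar F R a + 1) * χ (1 - a) := by
        refine Finset.sum_congr rfl fun a _ => ?_
        rw [← card_sqrts_eq_quadraticMulChar_add_one hF, ← nsmul_eq_mul, ← Finset.sum_const]
        exact Finset.sum_congr rfl fun y hy => by rw [(Finset.mem_filter.1 hy).2]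
    _ = jacobiSum χ (quadraticMulChar F R) := by
        simp only [add_mul, one_mul, Finset.sum_add_distrib, hsum, add_zero]
        rw [jacobiSum_comm, jacobiSum]

lemma apply_four_mul_jacobiSum_self (hF : ringChar F ≠ 2) {χ : MulChar F R} (hχ : χ ≠ 1) :
    χ 4 * jacobiSum χ χ = jacobiSum χ (quadraticMulChar F R) := by
  have h2 : (2 : F) ≠ 0 := Ring.two_ne_zero hF
  have hbij : Function.Bijective fun x : F => 2 * x - 1 :=
    (Equiv.subRight 1).bijective.comp (mulLeft_bijective₀ 2 h2)
  rw [← sum_apply_one_sub_sq hF hχ, jacobiSum, Finset.mul_sum]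
  refine Fintype.sum_bijective _ hbij _ _ fun x => ?_
  rw [← map_mul, ← map_mul]
  congr 1
  ring

/-- The case `m = 2` of the Hasse–Davenport product formula. -/
theorem gaussSum_mul_gaussSum_mul_quadraticMulChar (hF : ringChar F ≠ 2)
    (hcard : (Fintype.card F : R) ≠ 0) {χ : MulChar F R} (hχ : χ ^ 2 ≠ 1) {ψ : AddChar F R}
    (hψ : ψ.IsPrimitive) :
    χ 4 * (gaussSum χ ψ * gaussSum (χ * quadraticMulChar F R) ψ) =
      gaussSum (quadraticMulChar F R) ψ * gaussSum (χ ^ 2) ψ := by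
  have hχ1 : χ ≠ 1 := by
    rintro rfl
    exact hχ (one_pow 2)
  have hχη : χ * quadraticMulChar F R ≠ 1 := fun h => hχ <| by
    rw [eq_inv_of_mul_eq_one_left h, inv_pow, quadraticMulChar_sq, inv_one]
  have hself := jacobiSum_mul_nontrivial (sq χ ▸ hχ) ψ
  have hquad := jacobiSum_mul_nontrivial hχη ψ
  rw [← apply_four_mul_jacobiSum_self hF hχ1] at hquad
  rw [← sq χ] at hself
  apply mul_left_cancel₀ (gaussSum_ne_zero_of_nontrivial hcard hχ1 hψ)
  linear_combination gaussSum (χ ^ 2) ψ * hquad -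
    χ 4 * gaussSum (χ * quadraticMulChar F R) ψ * hself

end QuadraticCharacter

section TraceLift

variable {K F R : Type*} [Field K] [Field F] [Algebra K F] [CommRing R]

variable (F) in
/-- The additive character `ψ ∘ Tr` of `F` induced by an additive character `ψ` of a subfield. -/
noncomputable def traceLift (ψ : AddChar K R) : AddChar F R :=
  ψ.compAddMonoidHom (Algebra.trace K F).toAddMonoidHom

lemma traceLift_apply (ψ : AddChar K R) (x : F) : traceLift F ψ x = ψ (Algebra.trace K F x) :=
  rfl

lemma traceLift_isPrimitive [FiniteDimensional K F] [Algebra.IsSeparable K F] {ψ : AddChar K R}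
    (hψ : ψ ≠ 1) : (traceLift F ψ).IsPrimitive := by
  obtain ⟨c, hc⟩ := AddChar.ne_one_iff.1 hψ
  obtain ⟨x, rfl⟩ := Algebra.trace_surjective K F c
  exact AddChar.IsPrimitive.of_ne_one (AddChar.ne_one_iff.2 ⟨x, hc⟩)

variable [Fintype K] [Fintype F]

lemma sum_pow_card_pow_mul_trace (χ : MulChar F R) (h : K → R) (k : ℕ) :
    ∑ x, (χ ^ Fintype.card K ^ k) x * h (Algebra.trace K F x) =
      ∑ x, χ x * h (Algebra.trace K F x) := by
  induction k with
  | zero => rw [pow_zero, pow_one]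
  | succ k ih =>
    let frob := FiniteField.frobeniusAlgEquivOfAlgebraic K F
    rw [← ih]
    refine Fintype.sum_equiv frob.toEquiv _ _ fun x => ?_
    have hfrob : frob.toEquiv x = x ^ Fintype.card K := rfl
    have htrace : Algebra.trace K F (frob.toEquiv x) = Algebra.trace K F x :=
      Algebra.trace_eq_of_algEquiv frob x
    rw [htrace, hfrob, map_pow, ← MulChar.pow_apply' _ Fintype.card_ne_zero, ← pow_mul, ← pow_succ]

lemma gaussSum_pow_card_pow (χ : MulChar F R) (ψ : AddChar K R) (k : ℕ) :
    gaussSum (χ ^ Fintype.card K ^ k) (traceLift F ψ) = gaussSum χ (traceLift F ψ) :=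
  sum_pow_card_pow_mul_trace χ ψ k

end TraceLift

section EisensteinSum

variable {K F R : Type*} [Field K] [Field F] [Algebra K F] [CommRing R]

variable (K) in
/-- Restriction of multiplicative characters from `F` to a subfield `K`. -/
def restrictMulChar : MulChar F R →* MulChar K R where
  toFun χ :=
    { toMonoidHom := χ.toMonoidHom.comp (algebraMap K F).toMonoidHom
      map_nonunit' := fun a ha => by
        change χ (algebraMap K F a) = 0
        rw [isUnit_iff_ne_zero, not_not] at ha
        rw [ha, map_zero, MulChar.map_zero] }
  map_one' := by
    ext u
    exact (MulChar.one_apply (u.isUnit.map (algebraMap K F))).trans (MulChar.one_apply_coe u).symm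
  map_mul' χ φ := by
    ext u
    rfl

lemma restrictMulChar_apply (χ : MulChar F R) (c : K) :
    restrictMulChar K χ c = χ (algebraMap K F c) :=
  rfl

lemma restrictMulChar_sq_eq_one [Fintype K] (hK : Fintype.card K % 4 = 3) {χ : MulChar F R}
    {s : ℕ} (hχ : orderOf χ = 2 ^ s) : restrictMulChar K χ ^ 2 = 1 := by
  rw [← orderOf_dvd_iff_pow_eq_one]
  have hodd : Odd (Fintype.card K / 2) := Nat.odd_iff.2 (by omega)
  have hcop : Nat.Coprime (orderOf (restrictMulChar K χ)) (Fintype.card K / 2) :=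
    ((Nat.coprime_two_left.2 hodd).pow_left s).coprime_dvd_left
      (hχ ▸ orderOf_map_dvd (restrictMulChar K : MulChar F R →* MulChar K R) χ)
  refine hcop.dvd_of_dvd_mul_right ?_
  have hcard : 2 * (Fintype.card K / 2) = Fintype.card K - 1 := by omega
  rw [hcard]
  exact MulChar.orderOf_dvd_card_sub_one K (restrictMulChar K χ)

variable [Fintype F] [DecidableEq K]

/-- The Eisenstein sum of `χ` at `c`: the sum of `χ` over the elements of `F` of relative trace
`c` over `K`. In the literature the name refers to the value at `c = 1`. -/
noncomputable def eisensteinSum (χ : MulChar F R) (c : K) : R :=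
  ∑ x with Algebra.trace K F x = c, χ x

lemma eisensteinSum_eq_sum_mul (χ : MulChar F R) (c : K) :
    eisensteinSum χ c = ∑ x, χ x * (Pi.single c 1 : K → R) (Algebra.trace K F x) := by
  simp only [eisensteinSum, Finset.sum_filter, Pi.single_apply, mul_ite, mul_one, mul_zero]

lemma eisensteinSum_mul (χ : MulChar F R) {u : K} (hu : u ≠ 0) (c : K) :
    eisensteinSum χ (u * c) = restrictMulChar K χ u * eisensteinSum χ c := by
  have hu' : algebraMap K F u ≠ 0 := by simpa using hu
  simp only [eisensteinSum_eq_sum_mul, Finset.mul_sum]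
  refine (Fintype.sum_bijective _ (mulLeft_bijective₀ _ hu') _ _ fun x => ?_).symm
  have htrace : Algebra.trace K F (algebraMap K F u * x) = u * Algebra.trace K F x := by
    rw [← Algebra.smul_def, map_smul, smul_eq_mul]
  rw [htrace, map_mul, restrictMulChar_apply, mul_assoc]
  simp only [Pi.single_apply, mul_right_inj' hu]

lemma eisensteinSum_eq_restrictMulChar_mul [IsDomain R] {χ : MulChar F R}
    (hχ : restrictMulChar K χ ≠ 1) (c : K) :
    eisensteinSum χ c = restrictMulChar K χ c * eisensteinSum χ (1 : K) := by
  rcases eq_or_ne c 0 with rfl | hc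
  · obtain ⟨u, hu⟩ := MulChar.ne_one_iff.1 hχ
    have h := eisensteinSum_mul χ u.ne_zero 0
    rw [mul_zero] at h
    have hzero : eisensteinSum χ (0 : K) = 0 := by
      by_contra h0
      exact hu (mul_eq_right₀ h0 |>.1 h.symm)
    rw [hzero, MulChar.map_zero, zero_mul]
  · rw [← eisensteinSum_mul χ hc, mul_one]

variable [Fintype K]

lemma eisensteinSum_pow_card_pow (χ : MulChar F R) (c : K) (k : ℕ) :
    eisensteinSum (χ ^ Fintype.card K ^ k) c = eisensteinSum χ c := by
  simp only [eisensteinSum_eq_sum_mul, sum_pow_card_pow_mul_trace]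

theorem gaussSum_traceLift_eq_mul_eisensteinSum [IsDomain R] {χ : MulChar F R}
    (hχ : restrictMulChar K χ ≠ 1) (ψ : AddChar K R) :
    gaussSum χ (traceLift F ψ) =
      gaussSum (restrictMulChar K χ) ψ * eisensteinSum χ (1 : K) := by
  calc gaussSum χ (traceLift F ψ)
      = ∑ c, ∑ x with Algebra.trace K F x = c, χ x * ψ (Algebra.trace K F x) :=
        (Finset.sum_fiberwise _ _ _).symm
    _ = ∑ c, eisensteinSum χ c * ψ c := by
        refine Finset.sum_congr rfl fun c _ => ?_
        rw [eisensteinSum, Finset.sum_mul]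
        exact Finset.sum_congr rfl fun x hx => by rw [(Finset.mem_filter.1 hx).2]
    _ = gaussSum (restrictMulChar K χ) ψ * eisensteinSum χ (1 : K) := by
        rw [gaussSum, Finset.sum_mul]
        refine Finset.sum_congr rfl fun c _ => ?_
        rw [eisensteinSum_eq_restrictMulChar_mul hχ, mul_right_comm]

end EisensteinSum

section AbsoluteValue

variable {K F : Type*} [Field K] [Fintype K] [Field F] [Fintype F]

lemma normSq_gaussSum {χ : MulChar F ℂ} (hχ : χ ≠ 1) {ψ : AddChar F ℂ} (hψ : ψ.IsPrimitive) :
    normSq (gaussSum χ ψ) = Fintype.card F := by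
  have h := gaussSum_mul_gaussSum_eq_card hχ hψ
  rw [← star_gaussSum_eq, ← starRingEnd_apply, mul_conj] at h
  exact_mod_cast h

lemma card_mul_normSq_eisensteinSum [Algebra K F] [DecidableEq K] {χ : MulChar F ℂ}
    (hχ : restrictMulChar K χ ≠ 1) :
    Fintype.card K * normSq (eisensteinSum χ (1 : K)) = Fintype.card F := by
  have hψ := AddChar.FiniteField.primitiveChar_to_Complex_isPrimitive K
  set ψ := AddChar.FiniteField.primitiveChar_to_Complex K
  have hψ1 : ψ ≠ 1 := by simpa using hψ one_ne_zero
  have hχ1 : χ ≠ 1 := fun h => hχ (by rw [h, map_one])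
  rw [← normSq_gaussSum hχ hψ, ← map_mul, ← gaussSum_traceLift_eq_mul_eisensteinSum hχ,
    normSq_gaussSum hχ1 (traceLift_isPrimitive hψ1)]

end AbsoluteValue

section Integrality

variable {F R : Type*} [Field F] [CommRing R]

lemma isIntegral_mulChar_apply [Finite F] (χ : MulChar F R) (x : F) : IsIntegral ℤ (χ x) := by
  rcases eq_or_ne x 0 with rfl | hx
  · rw [MulChar.map_zero]
    exact isIntegral_zero
  · refine IsIntegral.of_pow χ.orderOf_pos ?_
    rw [← MulChar.pow_apply' _ χ.orderOf_pos.ne', pow_orderOf_eq_one, MulChar.one_apply hx.isUnit]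
    exact isIntegral_one

lemma isIntegral_addChar_apply {A : Type*} [AddGroup A] [Finite A] (ψ : AddChar A R) (x : A) :
    IsIntegral ℤ (ψ x) := by
  refine IsIntegral.of_pow (Nat.card_pos (α := A)) ?_
  rw [← AddChar.map_nsmul_eq_pow, card_nsmul_eq_zero', AddChar.map_zero_eq_one]
  exact isIntegral_one

lemma isIntegral_gaussSum [Fintype F] (χ : MulChar F R) (ψ : AddChar F R) :
    IsIntegral ℤ (gaussSum χ ψ) :=
  IsIntegral.sum _ fun x _ => (isIntegral_mulChar_apply χ x).mul (isIntegral_addChar_apply ψ x)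

end Integrality

section OrderTwoPow

variable {K F R : Type*} [Field K] [Fintype K] [Field F] [Fintype F] [CommRing R]

lemma orderOf_dvd_card_div_two (hF : ringChar F ≠ 2) {χ : MulChar F R} (hχ : χ (-1) = 1) :
    orderOf χ ∣ Fintype.card F / 2 := by
  refine orderOf_dvd_of_pow_eq_one ?_
  ext u
  rw [MulChar.pow_apply_coe, ← map_pow, MulChar.one_apply_coe]
  rcases FiniteField.pow_dichotomy hF u.ne_zero with h | h <;> simp [h, hχ]

variable [IsDomain R]

lemma mul_quadraticMulChar_eq_pow [DecidableEq F] [CharZero R] (hF : ringChar F ≠ 2) {q : ℕ}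
    (hq : q % 8 = 3 ∨ q % 8 = 5) {s : ℕ} {χ : MulChar F R} (hχ : orderOf χ = 2 ^ (s + 4)) :
    χ * quadraticMulChar F R = χ ^ q ^ 2 ^ (s + 1) := by
  obtain ⟨v, ⟨m, rfl⟩, hqv⟩ := exists_odd_pow_two_pow_eq_one_add hq s
  have hη : χ ^ 2 ^ (s + 3) = quadraticMulChar F R :=
    pow_eq_quadraticMulChar hF (by positivity) (by rw [hχ, pow_succ'])
  rw [hqv, pow_add, pow_one, pow_mul, hη, pow_succ, pow_mul, quadraticMulChar_sq, one_pow, one_mul]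

theorem apply_two_pow_mul_gaussSum_pow [DecidableEq F] [CharZero R] [Algebra K F]
    (hF : ringChar F ≠ 2) (hK : Fintype.card K % 8 = 3 ∨ Fintype.card K % 8 = 5)
    {ψ : AddChar K R} (hψ : ψ ≠ 1) (s : ℕ) {χ : MulChar F R} (hχ : orderOf χ = 2 ^ (s + 3)) :
    (χ 2 ^ s * gaussSum χ (traceLift F ψ)) ^ 2 ^ s =
      gaussSum (quadraticMulChar F R) (traceLift F ψ) ^ (2 ^ s - 1) *
        gaussSum (χ ^ 2 ^ s) (traceLift F ψ) := by
  induction s generalizing χ with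
  | zero => simp
  | succ s ih =>
    have hχ2 : orderOf (χ ^ 2) = 2 ^ (s + 3) := by
      rw [orderOf_pow_of_dvd two_ne_zero (hχ ▸ dvd_pow_self 2 (by omega)), hχ, add_right_comm,
        pow_succ, Nat.mul_div_cancel _ two_pos]
    have hχ2_ne : χ ^ 2 ≠ 1 := by
      rw [Ne, ← orderOf_eq_one_iff, hχ2]
      exact (Nat.one_lt_two_pow (by omega)).ne'
    have hcard : (Fintype.card F : R) ≠ 0 := Nat.cast_ne_zero.2 Fintype.card_ne_zero
    have hdup := gaussSum_mul_gaussSum_mul_quadraticMulChar hF hcard hχ2_ne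
      (traceLift_isPrimitive hψ)
    rw [mul_quadraticMulChar_eq_pow hF hK hχ, gaussSum_pow_card_pow] at hdup
    have hχ4 : χ 4 = χ 2 ^ 2 := by rw [← map_pow]; norm_num
    have hχ2_apply : (χ ^ 2) 2 = χ 2 ^ 2 := MulChar.pow_apply' _ two_ne_zero _
    have hih := ih hχ2
    rw [hχ2_apply, ← pow_mul χ, ← pow_succ'] at hih
    have hexp : 2 ^ (s + 1) - 1 = 2 ^ s + (2 ^ s - 1) := by
      rw [pow_succ, mul_two, Nat.add_sub_assoc Nat.one_le_two_pow]
    set η := quadraticMulChar F R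
    let G (φ : MulChar F R) := gaussSum φ (traceLift F ψ)
    calc (χ 2 ^ (s + 1) * G χ) ^ 2 ^ (s + 1)
        = (χ 2 ^ (2 * s) * (χ 4 * (G χ * G χ))) ^ 2 ^ s := by
          rw [hχ4, pow_succ' 2 s, pow_mul]
          ring
      _ = G η ^ 2 ^ s * ((χ 2 ^ 2) ^ s * G (χ ^ 2)) ^ 2 ^ s := by
          rw [hdup]
          ring
      _ = G η ^ (2 ^ (s + 1) - 1) * G (χ ^ 2 ^ (s + 1)) := by
          rw [hih, hexp, pow_add (G η), mul_assoc]

end OrderTwoPow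

section Evaluation

variable {K F : Type*} [Field K] [Fintype K] [Field F] [Fintype F]

lemma ringChar_ne_two_of_card_eq_pow {q m : ℕ} (hq : Odd q) (hF : Fintype.card F = q ^ m) :
    ringChar F ≠ 2 := by
  rw [Ne, FiniteField.even_card_iff_char_two, hF, ← Nat.even_iff, Nat.not_even_iff_odd]
  exact hq.pow

lemma mulChar_apply_neg_one {R : Type*} [CommRing R] [IsDomain R] {q n : ℕ}
    (hq : q % 8 = 3 ∨ q % 8 = 5) (hF : Fintype.card F = q ^ 2 ^ (n + 1)) {χ : MulChar F R}
    (hχ : orderOf χ = 2 ^ (n + 3)) : χ (-1) = -1 := by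
  have hsq : χ (-1) ^ 2 = 1 := by rw [← map_pow, neg_one_sq, map_one]
  refine (sq_eq_one_iff.1 hsq).resolve_left fun h => ?_
  have hF2 := ringChar_ne_two_of_card_eq_pow (Nat.odd_iff.2 (by omega)) hF
  obtain ⟨v, hv, hqv⟩ := exists_odd_pow_two_pow_eq_one_add hq n
  have hhalf : Fintype.card F / 2 = 2 ^ (n + 2) * v := by
    rw [hF, hqv, show 2 ^ (n + 3) * v = 2 * (2 ^ (n + 2) * v) by ring]
    omega
  have hdvd := orderOf_dvd_card_div_two hF2 h
  rw [hχ, hhalf, pow_succ] at hdvd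
  exact Nat.not_even_iff_odd.2 hv
    (even_iff_two_dvd.2 (Nat.dvd_of_mul_dvd_mul_left (by positivity) hdvd))

lemma exists_gaussSum_eq_mul_I_mul_sqrt {χ : MulChar K ℂ} (hχ : χ ^ 2 = 1) (hχ1 : χ (-1) = -1)
    {ψ : AddChar K ℂ} (hψ : ψ.IsPrimitive) :
    ∃ ε : ℂ, (ε = 1 ∨ ε = -1) ∧ gaussSum χ ψ = ε * (I * Real.sqrt (Fintype.card K)) := by
  have hsqrt : (Real.sqrt (Fintype.card K) : ℂ) ^ 2 = Fintype.card K := by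
    rw [← ofReal_pow, Real.sq_sqrt (Nat.cast_nonneg _), ofReal_natCast]
  have hsq : gaussSum χ ψ ^ 2 = (I * Real.sqrt (Fintype.card K)) ^ 2 := by
    rw [mul_pow, I_sq, hsqrt, gaussSum_sq (mulChar_ne_one_of_apply_neg_one hχ1)
      (MulChar.isQuadratic_iff_sq_eq_one.2 hχ) hψ, hχ1]
  rcases sq_eq_sq_iff_eq_or_eq_neg.1 hsq with h | h
  · exact ⟨1, Or.inl rfl, by rw [h, one_mul]⟩
  · exact ⟨-1, Or.inr rfl, by rw [h, neg_one_mul]⟩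

lemma gaussSum_quadraticMulChar_sq [DecidableEq F] (hF : ringChar F ≠ 2) {n : ℕ} {χ : MulChar F ℂ}
    (hχ : orderOf χ = 2 ^ (n + 3)) {ψ : AddChar F ℂ} (hψ : ψ.IsPrimitive) :
    gaussSum (quadraticMulChar F ℂ) ψ ^ 2 = Fintype.card F := by
  have hη : χ ^ 2 ^ (n + 2) = quadraticMulChar F ℂ :=
    pow_eq_quadraticMulChar hF (by positivity) (by rw [hχ, pow_succ'])
  have heven : Even (2 ^ (n + 2)) := Nat.even_pow.2 ⟨even_two, by omega⟩
  have hη_neg_one : quadraticMulChar F ℂ (-1) = 1 := by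
    rw [← hη, MulChar.pow_apply' _ (by positivity), ← map_pow, heven.neg_one_pow, map_one]
  rw [gaussSum_sq (quadraticMulChar_ne_one hF)
    (MulChar.isQuadratic_iff_sq_eq_one.2 quadraticMulChar_sq) hψ, hη_neg_one, one_mul]

variable [Algebra K F]

lemma isIntegral_gaussSum_div (hK : Fintype.card K % 8 = 3 ∨ Fintype.card K % 8 = 5) {n : ℕ}
    (hF : Fintype.card F = Fintype.card K ^ 2 ^ (n + 1)) {χ : MulChar F ℂ}
    (hχ : orderOf χ = 2 ^ (n + 3)) {ψ : AddChar K ℂ} (hψ : ψ ≠ 1) :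
    IsIntegral ℤ (gaussSum χ (traceLift F ψ) / (Fintype.card K : ℂ) ^ (2 ^ n - 1)) := by
  classical
  have hF2 := ringChar_ne_two_of_card_eq_pow (Nat.odd_iff.2 (by omega)) hF
  have hq0 : (Fintype.card K : ℂ) ≠ 0 := Nat.cast_ne_zero.2 Fintype.card_ne_zero
  have hdup := apply_two_pow_mul_gaussSum_pow hF2 hK hψ n hχ
  have hη := gaussSum_quadraticMulChar_sq hF2 hχ (traceLift_isPrimitive hψ)
  set q : ℂ := (Fintype.card K : ℂ) with hq
  set G := gaussSum χ (traceLift F ψ)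
  set Gη := gaussSum (quadraticMulChar F ℂ) (traceLift F ψ)
  have hunit : IsIntegral ℤ (Gη / q ^ 2 ^ n) := by
    refine IsIntegral.of_pow two_pos ?_
    rw [div_pow, hη, hF, Nat.cast_pow, ← pow_mul, ← pow_succ, ← hq, div_self (pow_ne_zero _ hq0)]
    exact isIntegral_one
  have hpow : (χ 2 ^ n * (G / q ^ (2 ^ n - 1))) ^ 2 ^ n =
      (Gη / q ^ 2 ^ n) ^ (2 ^ n - 1) * gaussSum (χ ^ 2 ^ n) (traceLift F ψ) := by
    rw [← mul_div_assoc, div_pow, hdup, div_pow, ← pow_mul, ← pow_mul, mul_comm (2 ^ n)]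
    ring
  have hint : IsIntegral ℤ (χ 2 ^ n * (G / q ^ (2 ^ n - 1))) := by
    refine IsIntegral.of_pow (n := 2 ^ n) (by positivity) ?_
    rw [hpow]
    exact (hunit.pow _).mul (isIntegral_gaussSum _ _)
  have hχ2 : χ⁻¹ 2 * χ 2 = 1 := by
    rw [← MulChar.mul_apply, inv_mul_cancel, MulChar.one_apply (Ring.two_ne_zero hF2).isUnit]
  have hcancel := ((isIntegral_mulChar_apply χ⁻¹ 2).pow n).mul hint
  rwa [← mul_assoc, ← mul_pow, hχ2, one_pow, one_mul] at hcancel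

lemma eisensteinSum_mem_adjoin_sqrtNeg_two [DecidableEq K] (hK : Fintype.card K % 8 = 3) {n : ℕ}
    {χ : MulChar F ℂ} (hχ : orderOf χ = 2 ^ (n + 3)) (c : K) :
    eisensteinSum χ c ∈ ℚ⟮sqrtNeg 2⟯ := by
  have horbit : (2 ^ (n + 1) : ℕ) * eisensteinSum χ c =
      ∑ x with Algebra.trace K F x = c,
        ∑ k ∈ Finset.range (2 ^ (n + 1)), χ x ^ Fintype.card K ^ k := by
    rw [Finset.sum_comm]
    calc (2 ^ (n + 1) : ℕ) * eisensteinSum χ c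
        = ∑ k ∈ Finset.range (2 ^ (n + 1)), eisensteinSum (χ ^ Fintype.card K ^ k) c := by
          simp only [eisensteinSum_pow_card_pow, Finset.sum_const, Finset.card_range, nsmul_eq_mul]
      _ = _ := by
          simp only [eisensteinSum, MulChar.pow_apply' _ (pow_ne_zero _ Fintype.card_ne_zero)]
  have horbit_mem (x : F) :
      ∑ k ∈ Finset.range (2 ^ (n + 1)), χ x ^ Fintype.card K ^ k ∈ ℚ⟮sqrtNeg 2⟯ := by
    rcases eq_or_ne x 0 with rfl | hx
    · refine sum_mem fun k _ => ?_
      rw [MulChar.map_zero, zero_pow (pow_ne_zero _ Fintype.card_ne_zero)]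
      exact zero_mem _
    · refine sum_pow_pow_mem_adjoin_sqrtNeg_two hK n ?_
      rw [← hχ, ← MulChar.pow_apply' _ χ.orderOf_pos.ne', pow_orderOf_eq_one,
        MulChar.one_apply hx.isUnit]
  have h2 : ((2 ^ (n + 1) : ℕ) : ℂ) ≠ 0 := Nat.cast_ne_zero.2 (by positivity)
  rw [eq_div_of_mul_eq h2 ((mul_comm _ _).trans horbit)]
  exact div_mem (sum_mem fun x _ => horbit_mem x) (_root_.natCast_mem _ _)

lemma restrictMulChar_neg_one {R : Type*} [CommRing R] [IsDomain R]
    (hK : Fintype.card K % 8 = 3 ∨ Fintype.card K % 8 = 5) {n : ℕ}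
    (hF : Fintype.card F = Fintype.card K ^ 2 ^ (n + 1)) {χ : MulChar F R}
    (hχ : orderOf χ = 2 ^ (n + 3)) : restrictMulChar K χ (-1) = -1 := by
  rw [restrictMulChar_apply, map_neg, map_one, mulChar_apply_neg_one hK hF hχ]

lemma isIntegral_card_mul_eisensteinSum_div_sq [DecidableEq K] (hK : Fintype.card K % 8 = 3)
    {n : ℕ} (hF : Fintype.card F = Fintype.card K ^ 2 ^ (n + 1)) {χ : MulChar F ℂ}
    (hχ : orderOf χ = 2 ^ (n + 3)) :
    IsIntegral ℤ ((Fintype.card K : ℂ) *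
      (eisensteinSum χ (1 : K) / (Fintype.card K : ℂ) ^ (2 ^ n - 1)) ^ 2) := by
  have hψ := AddChar.FiniteField.primitiveChar_to_Complex_isPrimitive K
  set ψ := AddChar.FiniteField.primitiveChar_to_Complex K
  have hψ1 : ψ ≠ 1 := by simpa using hψ one_ne_zero
  have hneg := restrictMulChar_neg_one (Or.inl hK) hF hχ
  have hne := mulChar_ne_one_of_apply_neg_one hneg
  have hquad := MulChar.isQuadratic_iff_sq_eq_one.2
    (restrictMulChar_sq_eq_one (K := K) (by omega) hχ)
  have hsq : (gaussSum χ (traceLift F ψ) / (Fintype.card K : ℂ) ^ (2 ^ n - 1)) ^ 2 =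
      -((Fintype.card K : ℂ) *
        (eisensteinSum χ (1 : K) / (Fintype.card K : ℂ) ^ (2 ^ n - 1)) ^ 2) := by
    rw [gaussSum_traceLift_eq_mul_eisensteinSum hne, mul_div_assoc, mul_pow,
      gaussSum_sq hne hquad hψ, hneg]
    ring
  rw [← IsIntegral.neg_iff, ← hsq]
  exact (isIntegral_gaussSum_div (Or.inl hK) hF hχ hψ1).pow 2

lemma normSq_eisensteinSum_div [DecidableEq K]
    (hK : Fintype.card K % 8 = 3 ∨ Fintype.card K % 8 = 5) {n : ℕ}
    (hF : Fintype.card F = Fintype.card K ^ 2 ^ (n + 1)) {χ : MulChar F ℂ}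
    (hχ : orderOf χ = 2 ^ (n + 3)) :
    normSq (eisensteinSum χ (1 : K) / (Fintype.card K : ℂ) ^ (2 ^ n - 1)) = Fintype.card K := by
  have hq0 : (Fintype.card K : ℝ) ≠ 0 := Nat.cast_ne_zero.2 Fintype.card_ne_zero
  have hne := mulChar_ne_one_of_apply_neg_one (restrictMulChar_neg_one hK hF hχ)
  have hexp : 2 ^ (n + 1) = 1 + 1 + (2 ^ n - 1) * 2 := by
    have := Nat.one_le_two_pow (n := n)
    omega
  have hE := card_mul_normSq_eisensteinSum hne
  rw [hF, Nat.cast_pow, hexp, pow_add _ (1 + 1), pow_succ, pow_one, mul_assoc] at hE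
  rw [map_div₀, map_pow, normSq_natCast, mul_left_cancel₀ hq0 hE, ← sq, ← pow_mul, mul_comm 2]
  exact mul_div_cancel_right₀ _ (pow_ne_zero _ hq0)

theorem exists_int_eisensteinSum_eq [DecidableEq K] (hKp : (Fintype.card K).Prime)
    (hK : Fintype.card K % 8 = 3) {n : ℕ}
    (hF : Fintype.card F = Fintype.card K ^ 2 ^ (n + 1)) {χ : MulChar F ℂ}
    (hχ : orderOf χ = 2 ^ (n + 3)) :
    ∃ a b : ℤ, a ^ 2 + 2 * b ^ 2 = Fintype.card K ∧
      eisensteinSum χ (1 : K) = (Fintype.card K : ℂ) ^ (2 ^ n - 1) * (a + b * sqrtNeg 2) := by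
  have hq0 : (Fintype.card K : ℂ) ≠ 0 := Nat.cast_ne_zero.2 Fintype.card_ne_zero
  have hmem := div_mem (eisensteinSum_mem_adjoin_sqrtNeg_two hK hχ (1 : K))
    (pow_mem (_root_.natCast_mem ℚ⟮sqrtNeg 2⟯ (Fintype.card K)) (2 ^ n - 1))
  obtain ⟨x, y, hxy⟩ := exists_rat_eq_of_mem_adjoin_sqrtNeg hmem
  have hnorm : x ^ 2 + 2 * y ^ 2 = (Fintype.card K : ℤ) := by
    have h := normSq_eisensteinSum_div (Or.inl hK) hF hχ
    rw [hxy, ← ofReal_ratCast, ← ofReal_ratCast, normSq_add_mul_sqrtNeg] at h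
    exact_mod_cast h
  have hint := isIntegral_card_mul_eisensteinSum_div_sq hK hF hχ
  rw [hxy, ← Int.cast_natCast] at hint
  obtain ⟨a, b, rfl, rfl⟩ :=
    exists_int_eq_of_isIntegral_mul_sq (Int.squarefree_natCast.2 hKp.squarefree) hnorm hint
  refine ⟨a, b, by exact_mod_cast hnorm, ?_⟩
  rw [div_eq_iff (pow_ne_zero _ hq0), Rat.cast_intCast, Rat.cast_intCast] at hxy
  rw [hxy, mul_comm]

end Evaluation

lemma zetaP_pow_val (p : ℕ) [NeZero p] (t : ZMod p) : zetaP p ^ t.val = ZMod.stdAddChar t := by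
  have h := ZMod.stdAddChar_coe (N := p) (t.val : ℤ)
  rw [Int.cast_natCast, ZMod.natCast_zmod_val] at h
  rw [h, zetaP, ← Complex.exp_nat_mul, Int.cast_natCast]
  congr 1
  ring

lemma gaussSumN_eq_gaussSum (p : ℕ) [Fact p.Prime] {F : Type} [Field F] [Fintype F]
    [Algebra (ZMod p) F] (χ : MulChar F ℂ) (lam : ℕ) :
    gaussSumN p χ lam = gaussSum (χ ^ lam) (traceLift F (ZMod.stdAddChar (N := p))) := by
  classical
  rw [gaussSumN, gaussSum, Finset.sum_filter]
  refine Finset.sum_congr rfl fun x _ => ?_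
  split_ifs with hx
  · rw [traceLift_apply, zetaP_pow_val]
  · rw [not_not.1 hx, MulChar.map_zero, zero_mul]

theorem statement6 (p r0 N f : ℕ) (hp : p.Prime) (hr0 : 3 ≤ r0) (hN : N = 2 ^ r0)
    (hp8 : p % 8 = 3) (hNp : Nat.gcd N p = 1)
    (hf : orderOf (p : ZMod N) = f)
    (F : Type) [Field F] [Fintype F] [Algebra (ZMod p) F]
    (hcard : Fintype.card F = p ^ f)
    (χ : MulChar F ℂ) (hχord : orderOf χ = N) :
    ∃ ε : ℂ, (ε = 1 ∨ ε = -1) ∧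
      ∃ a b : ℤ, a ^ 2 + 2 * b ^ 2 = (p : ℤ) ∧
        gaussSumN p χ 1 =
          ε * (Complex.I * (Real.sqrt p : ℂ)) * (p : ℂ) ^ ((2 ^ (r0 - 3) - 1 : ℕ)) *
            ((a : ℂ) + (b : ℂ) * sqrtNeg 2) := by
  have : Fact p.Prime := ⟨hp⟩
  obtain ⟨n, rfl⟩ := Nat.exists_eq_add_of_le' hr0
  have hK : Fintype.card (ZMod p) = p := ZMod.card p
  have hK8 : Fintype.card (ZMod p) % 8 = 3 := by rw [hK, hp8]
  rw [hN] at hχord hf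
  rw [orderOf_natCast_zmod_two_pow (Or.inl hp8)] at hf
  have hF : Fintype.card F = Fintype.card (ZMod p) ^ 2 ^ (n + 1) := by rw [hK, hcard, hf]
  have hneg := restrictMulChar_neg_one (K := ZMod p) (Or.inl hK8) hF hχord
  have hsq := restrictMulChar_sq_eq_one (K := ZMod p) (by omega) hχord
  obtain ⟨ε, hε, hg⟩ :=
    exists_gaussSum_eq_mul_I_mul_sqrt hsq hneg (ZMod.isPrimitive_stdAddChar p)
  obtain ⟨a, b, hab, hE⟩ := exists_int_eisensteinSum_eq (K := ZMod p) (by rwa [hK]) hK8 hF hχord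
  rw [hK] at hab hg hE
  refine ⟨ε, hε, a, b, hab, ?_⟩
  rw [gaussSumN_eq_gaussSum, pow_one,
    gaussSum_traceLift_eq_mul_eisensteinSum (mulChar_ne_one_of_apply_neg_one hneg), hg, hE,
    Nat.add_sub_cancel, mul_assoc _ (_ ^ _)]
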